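/- arXiv:1102.2734 — 2 statements merged into one kernel-verified Lean document; each statement's English description precedes it below -/
import Mathlib

section
/- Let m ≥ 3 and 0 ≤ r ≤ m−1, and write U_h = U_h(RM(r,m)), α = α^(m), β = β^(m). Then for all integers i with 0 ≤ i ≤ α − 2^{m−1} and all integers j with 0 ≤ j ≤ β − (α − 2^{m−1} + 1), one has (U_α − U_{α−i}) + (U_β − U_{β−j}) ≥ U_{i+j+1} − U_1. -/
open Module

/-- The submodule of vectors supported on `J` (i.e. zero outside `J`). -/
def supportedOn (F : Type) [Field F] {n : ℕ} (J : Set (Fin n)) : Submodule F (Fin n → F) :=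
  Submodule.pi Jᶜ fun _ => ⊥

/-- Dimension of the shortening `C_J` of the code `C` to the coordinates in `J`. -/
noncomputable def shortDim {F : Type} [Field F] {n : ℕ}
    (C : Submodule F (Fin n → F)) (J : Set (Fin n)) : ℕ :=
  finrank F ↥(C ⊓ supportedOn F J)

/-- Support of a subcode. -/
def chi {F : Type} [Field F] {n : ℕ} (D : Submodule F (Fin n → F)) : Set (Fin n) :=
  {i | ∃ c ∈ D, c i ≠ 0}

/-- `Ucap C s`: maximal dimension of a subcode of `C` whose support has size at most `s`. -/
noncomputable def Ucap {F : Type} [Field F] {n : ℕ}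
    (C : Submodule F (Fin n → F)) (s : ℕ) : ℕ :=
  sSup {d : ℕ | ∃ D : Submodule F (Fin n → F), D ≤ C ∧ (chi D).ncard ≤ s ∧ finrank F ↥D = d}

/-- The binary Reed–Muller code `RM(r,m)`: the evaluation vectors, at the points of
`{0,1}^m` listed in the standard bit order, of the `m`-variable polynomials over `F₂`
of total degree at most `r`. -/
def RMcode (r m : ℕ) : Submodule (ZMod 2) (Fin (2 ^ m) → ZMod 2) :=
  Submodule.span (ZMod 2)
    {w | ∃ f : MvPolynomial (Fin m) (ZMod 2), f.totalDegree ≤ r ∧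
      w = fun i => MvPolynomial.eval (fun j : Fin m => if Nat.testBit i.val j.val then 1 else 0) f}

/-- `α(m)`: the largest integer not exceeding `(2/3)·2^m`. -/
def alph (m : ℕ) : ℕ := 2 ^ (m + 1) / 3

/-- `β(m)`: the largest integer not exceeding `(1/3)·2^m`. -/
def bet (m : ℕ) : ℕ := 2 ^ m / 3



/-- binary weight -/
def bwt (n : ℕ) : ℕ := if h : n = 0 then 0 else n % 2 + bwt (n / 2)
termination_by n
decreasing_by omega

theorem bwt_zero : bwt 0 = 0 := by rw [bwt]; simp

theorem bwt_even (n : ℕ) : bwt (2 * n) = bwt n := by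
  by_cases h : n = 0
  · subst h; simp
  · rw [bwt, dif_neg (by omega)]
    have h1 : 2 * n % 2 = 0 := by omega
    have h2 : 2 * n / 2 = n := by omega
    rw [h1, h2]; omega

theorem bwt_odd (n : ℕ) : bwt (2 * n + 1) = bwt n + 1 := by
  rw [bwt, dif_neg (by omega)]
  have h1 : (2 * n + 1) % 2 = 1 := by omega
  have h2 : (2 * n + 1) / 2 = n := by omega
  rw [h1, h2]; omega

theorem bwt_succ_le (n : ℕ) : bwt (n + 1) ≤ bwt n + 1 := by
  induction n using Nat.strong_induction_on with
  | _ n ih =>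
    rcases Nat.even_or_odd' n with ⟨q, h | h⟩
    · subst h; rw [bwt_odd, bwt_even]
    · subst h
      have e : 2 * q + 1 + 1 = 2 * (q + 1) := by ring
      rw [e, bwt_even, bwt_odd]
      have := ih q (by omega)
      omega

theorem bwt_pow_add (k : ℕ) : ∀ n, n < 2 ^ k → bwt (2 ^ k + n) = bwt n + 1 := by
  induction k with
  | zero =>
    intro n hn
    have : n = 0 := by simpa using hn
    subst this
    have := bwt_odd 0
    simpa using this
  | succ k ih =>
    intro n hn
    rw [pow_succ] at *
    rcases Nat.even_or_odd' n with ⟨q, h | h⟩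
    · subst h
      have e : 2 ^ k * 2 + 2 * q = 2 * (2 ^ k + q) := by ring
      rw [e, bwt_even, bwt_even, ih q (by omega)]
    · subst h
      have e : 2 ^ k * 2 + (2 * q + 1) = 2 * (2 ^ k + q) + 1 := by ring
      rw [e, bwt_odd, bwt_odd, ih q (by omega)]

theorem bwt_card (k : ℕ) : ∀ n, n < 2 ^ k →
    bwt n = ((Finset.range k).filter (fun j => n.testBit j = true)).card := by
  induction k with
  | zero =>
    intro n hn
    have : n = 0 := by simpa using hn
    subst this
    simp [bwt_zero]
  | succ k ih =>
    intro n hn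
    rw [Finset.card_filter, Finset.sum_range_succ', ]
    simp only [Nat.testBit_succ]
    rw [← Finset.card_filter, ← ih (n / 2) (by rw [pow_succ] at hn; omega)]
    rcases Nat.even_or_odd' n with ⟨q, h | h⟩
    · subst h
      have h2 : 2 * q / 2 = q := by omega
      rw [bwt_even, h2]; simp
    · subst h
      have h2 : (2 * q + 1) / 2 = q := by omega
      rw [bwt_odd, h2]; simp

/-- the number of `k < s` of binary weight at least `t` -/
def cnt (t s : ℕ) : ℕ := Nat.count (fun k => t ≤ bwt k) s

theorem cnt_zero (t : ℕ) : cnt t 0 = 0 := by simp [cnt]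

theorem cnt_succ (t s : ℕ) : cnt t (s + 1) = cnt t s + if t ≤ bwt s then 1 else 0 := by
  simp only [cnt, Nat.count_succ]

theorem cnt_mono (t : ℕ) {a b : ℕ} (h : a ≤ b) : cnt t a ≤ cnt t b := Nat.count_monotone _ h

theorem cnt_even (t s : ℕ) : cnt t (2 * s) = cnt t s + cnt (t - 1) s := by
  induction s with
  | zero => simp [cnt_zero]
  | succ s ih =>
    have e : 2 * (s + 1) = 2 * s + 1 + 1 := by ring
    rw [e, cnt_succ, cnt_succ, ih, cnt_succ, cnt_succ, bwt_even, bwt_odd]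
    split_ifs <;> omega

theorem cnt_odd (t s : ℕ) : cnt t (2 * s + 1) = cnt t (s + 1) + cnt (t - 1) s := by
  rw [cnt_succ, cnt_even, cnt_succ, bwt_even]; omega

/-- shifted blocks -/
theorem cnt_add (a : ℕ) : ∀ b t, a ≤ b → cnt (t - 1) a + cnt t b ≤ cnt t (a + b) := by
  induction a using Nat.strong_induction_on with
  | _ a ih =>
    intro b t hab
    rcases Nat.lt_or_ge a 2 with h2 | h2
    · interval_cases a
      · simp [cnt_zero]
      · rw [Nat.add_comm 1 b, cnt_succ, ← Nat.zero_add 1, cnt_succ, cnt_zero, bwt_zero]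
        have : 1 ≤ bwt b := by
          clear ih
          induction b using Nat.strong_induction_on with
          | _ b ihb =>
            rcases Nat.even_or_odd' b with ⟨q, h | h⟩
            · subst h; rw [bwt_even]; exact ihb q (by omega) (by omega)
            · subst h; rw [bwt_odd]; omega
        split_ifs <;> omega
    rcases Nat.even_or_odd' a with ⟨d, h | h⟩ <;> rcases Nat.even_or_odd' b with ⟨c, h' | h'⟩ <;>
      subst h <;> subst h'
    · have e : 2 * d + 2 * c = 2 * (d + c) := by ring
      rw [e, cnt_even, cnt_even, cnt_even]
      have := ih d (by omega) c t (by omega)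
      have := ih d (by omega) c (t-1) (by omega)
      omega
    · have e : 2 * d + (2 * c + 1) = 2 * (d + c) + 1 := by ring
      rw [e, cnt_odd, cnt_odd, cnt_even]
      have := ih d (by omega) (c+1) t (by omega)
      have := ih d (by omega) c (t-1) (by omega)
      rw [← add_assoc] at *
      omega
    · have e : 2 * d + 1 + 2 * c = 2 * (d + c) + 1 := by ring
      rw [e, cnt_odd, cnt_odd, cnt_even]
      have h1 := ih (d+1) (by omega) c t (by omega)
      have := ih d (by omega) c (t-1) (by omega)
      have e : d + 1 + c = d + c + 1 := by ring
      rw [e] at h1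
      omega
    · have e : 2 * d + 1 + (2 * c + 1) = 2 * (d + c + 1) := by ring
      rw [e, cnt_even, cnt_odd, cnt_odd]
      have h1 := ih (d+1) (by omega) (c+1) t (by omega)
      have h3 := ih d (by omega) c (t-1) (by omega)
      have e : d + 1 + (c + 1) = d + c + 1 + 1 := by ring
      rw [e, cnt_succ t (d+c+1)] at h1
      rw [cnt_succ (t-1) (d+c)]
      have := bwt_succ_le (d+c)
      split_ifs at * <;> omega

theorem cnt_final (k : ℕ) : ∀ c x t, c + x ≤ 2 ^ k →
    cnt t (c + x) + cnt t (2 ^ k - x) ≤ cnt t c + cnt t (2 ^ k) := by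
  induction k with
  | zero =>
    intro c x t h
    rw [pow_zero] at *
    rcases Nat.eq_zero_or_pos x with h0 | h0
    · subst h0; simp
    · have : x = 1 := by omega
      have : c = 0 := by omega
      subst x; subst c; simp; omega
  | succ k ih =>
    intro c x t h
    have e0 : (2:ℕ) ^ (k+1) = 2 * 2 ^ k := by ring
    rw [e0] at h ⊢; clear e0
    rcases Nat.even_or_odd' c with ⟨e, h1 | h1⟩ <;> rcases Nat.even_or_odd' x with ⟨d, h' | h'⟩ <;>
      subst h1 <;> subst h'
    · have e1 : 2 * e + 2 * d = 2 * (e + d) := by ring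
      have e2 : 2 * 2 ^ k - 2 * d = 2 * (2 ^ k - d) := by omega
      rw [e1, e2]; simp only [cnt_even]
      have := ih e d t (by omega)
      have := ih e d (t-1) (by omega)
      omega
    · have e1 : 2 * e + (2 * d + 1) = 2 * (e + d) + 1 := by ring
      have e2 : 2 * 2 ^ k - (2 * d + 1) = 2 * (2 ^ k - (d + 1)) + 1 := by omega
      have e3 : 2 ^ k - (d + 1) + 1 = 2 ^ k - d := by omega
      rw [e1, e2]; simp only [cnt_even, cnt_odd]
      rw [e3]
      have := ih e d t (by omega)
      have h5 := ih e (d+1) (t-1) (by omega)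
      rw [← add_assoc, cnt_succ (t-1) (e+d)] at h5
      rw [cnt_succ t (e+d)]
      split_ifs at * <;> omega
    · have e1 : 2 * e + 1 + 2 * d = 2 * (e + d) + 1 := by ring
      have e2 : 2 * 2 ^ k - 2 * d = 2 * (2 ^ k - d) := by omega
      rw [e1, e2]; simp only [cnt_even, cnt_odd]
      have h4 := ih (e+1) d t (by omega)
      have := ih e d (t-1) (by omega)
      rw [Nat.add_right_comm] at h4
      omega
    · have e1 : 2 * e + 1 + (2 * d + 1) = 2 * (e + d + 1) := by ring
      have e2 : 2 * 2 ^ k - (2 * d + 1) = 2 * (2 ^ k - (d + 1)) + 1 := by omega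
      have e3 : 2 ^ k - (d + 1) + 1 = 2 ^ k - d := by omega
      rw [e1, e2]; simp only [cnt_even, cnt_odd]
      rw [e3]
      have h4 := ih (e+1) d t (by omega)
      have h5 := ih e (d+1) (t-1) (by omega)
      rw [Nat.add_right_comm] at h4
      rw [← add_assoc] at h5
      omega

theorem cnt_top (k t : ℕ) : ∀ n, n ≤ 2 ^ k → cnt t (2 ^ k + n) = cnt t (2 ^ k) + cnt (t - 1) n := by
  intro n
  induction n with
  | zero => simp [cnt_zero]
  | succ n ih =>
    intro h
    rw [← add_assoc, cnt_succ, cnt_succ, ih (by omega), bwt_pow_add k n (by omega)]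
    split_ifs <;> omega

theorem cnt_anti (t n : ℕ) (c : ℕ) : cnt (t + 1) (c + n) + cnt t c ≤ cnt (t + 1) c + cnt t (c + n) := by
  induction n with
  | zero => simp
  | succ n ih =>
    rw [← add_assoc, cnt_succ, cnt_succ]
    split_ifs <;> omega

theorem alph_two (m : ℕ) : alph (m + 2) = 2 ^ (m + 1) + alph m := by
  simp only [alph, pow_succ]; omega

theorem bet_two (m : ℕ) : bet (m + 2) = 2 ^ m + bet m := by
  simp only [bet, pow_succ]; omega

theorem alph_add_bet (m : ℕ) : alph m + bet m + 1 = 2 ^ m := by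
  have : 2 ^ m % 3 ≠ 0 := by
    intro h
    have := Nat.Prime.dvd_of_dvd_pow Nat.prime_three (Nat.dvd_of_mod_eq_zero h)
    omega
  simp only [alph, bet, pow_succ]; omega

theorem bet_le_alph (m : ℕ) : bet m ≤ alph m := by
  simp only [alph, bet, pow_succ]; omega

theorem cnt_Q (m : ℕ) : ∀ t i j, i ≤ alph m → j ≤ bet m →
    cnt (t + 1) (i + j + 1) + cnt t (alph m - i) + cnt t (bet m - j) ≤
      cnt t (alph m) + cnt t (bet m) + cnt (t + 1) 1 := by
  induction m using Nat.twoStepInduction with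
  | zero =>
    intro t i j hi hj
    have h1 : alph 0 = 0 := by simp [alph]
    have h2 : bet 0 = 0 := by simp [bet]
    rw [h1] at hi ⊢; rw [h2] at hj ⊢
    have : i = 0 := by omega
    have : j = 0 := by omega
    subst i; subst j
    simp; omega
  | one =>
    intro t i j hi hj
    have h1 : alph 1 = 1 := by simp [alph]
    have h2 : bet 1 = 0 := by simp [bet]
    rw [h1] at hi ⊢; rw [h2] at hj ⊢
    have : j = 0 := by omega
    subst j
    have hb : bwt 1 = 1 := by simpa [bwt_zero] using bwt_odd 0
    interval_cases i
    · simp; omega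
    · simp [cnt_succ, cnt_zero, hb, bwt_zero]
  | more m ih _ =>
    intro t i j hi hj
    have hs := alph_add_bet m
    have hp : (2:ℕ) ^ (m+1) = 2 * 2 ^ m := by ring
    have hp2 : (2:ℕ) ^ (m+2) = 4 * 2 ^ m := by ring
    rw [alph_two, bet_two] at *
    -- small case
    have small : ∀ i j, i ≤ alph m → j ≤ bet m →
        cnt (t + 1) (i + j + 1) + cnt t (2 ^ (m+1) + alph m - i) + cnt t (2 ^ m + bet m - j) ≤
        cnt t (2 ^ (m+1) + alph m) + cnt t (2 ^ m + bet m) + cnt (t + 1) 1 := by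
      intro i j hi hj
      rw [Nat.add_sub_assoc hi, Nat.add_sub_assoc hj, cnt_top (m+1) t _ (by omega),
        cnt_top (m+1) t _ (by omega), cnt_top m t _ (by omega), cnt_top m t _ (by omega)]
      have h1 := ih (t-1) i j hi hj
      rcases Nat.eq_zero_or_pos t with h0 | h0
      · subst h0
        simp only [Nat.zero_sub] at *
        omega
      · obtain ⟨u, rfl⟩ : ∃ u, t = u + 1 := ⟨t - 1, by omega⟩
        simp only [Nat.add_sub_cancel] at *
        have := cnt_anti (u+1) (i+j) 1
        rw [Nat.add_comm 1 (i+j)] at this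
        omega
    -- general j
    have mid : ∀ i j, i ≤ alph m → j ≤ 2 ^ m + bet m →
        cnt (t + 1) (i + j + 1) + cnt t (2 ^ (m+1) + alph m - i) + cnt t (2 ^ m + bet m - j) ≤
        cnt t (2 ^ (m+1) + alph m) + cnt t (2 ^ m + bet m) + cnt (t + 1) 1 := by
      intro i j hi hj
      rcases Nat.lt_or_ge (bet m) j with h | h
      swap
      · exact small i j hi h
      obtain ⟨x, rfl⟩ : ∃ x, j = bet m + x := ⟨j - bet m, by omega⟩
      have h1 := small i (bet m) hi le_rfl
      have h2 := cnt_final (m+1) (i + bet m + 1) x (t+1) (by omega)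
      have e1 : 2 ^ (m+1) - x = 2 ^ m + (2 ^ m - x) := by omega
      have e2 : (2:ℕ) ^ (m+1) = 2 ^ m + 2 ^ m := by omega
      have e3 : i + (bet m + x) + 1 = i + bet m + 1 + x := by omega
      have e4 : 2 ^ m + bet m - (bet m + x) = 2 ^ m - x := by omega
      have e5 : 2 ^ m + bet m - bet m = 2 ^ m := by omega
      rw [e1, e2, cnt_top m _ _ (by omega), cnt_top m _ _ le_rfl] at h2
      simp only [Nat.add_sub_cancel] at h2
      rw [e5] at h1
      rw [e3, e4]
      omega
    rcases Nat.lt_or_ge (alph m) i with h | h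
    swap
    · exact mid i j h hj
    obtain ⟨x, rfl⟩ : ∃ x, i = alph m + x := ⟨i - alph m, by omega⟩
    have h1 := mid (alph m) j le_rfl hj
    have h2 := cnt_final (m+2) (alph m + j + 1) x (t+1) (by omega)
    have e1 : 2 ^ (m+2) - x = 2 ^ (m+1) + (2 ^ (m+1) - x) := by omega
    have e2 : (2:ℕ) ^ (m+2) = 2 ^ (m+1) + 2 ^ (m+1) := by omega
    have e3 : alph m + x + j + 1 = alph m + j + 1 + x := by omega
    have e4 : 2 ^ (m+1) + alph m - (alph m + x) = 2 ^ (m+1) - x := by omega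
    have e5 : 2 ^ (m+1) + alph m - alph m = 2 ^ (m+1) := by omega
    rw [e1, e2, cnt_top (m+1) _ _ (by omega), cnt_top (m+1) _ _ le_rfl] at h2
    simp only [Nat.add_sub_cancel] at h2
    rw [e5] at h1
    rw [e3, e4]
    omega

theorem cnt_main (m t i j : ℕ) (hm : 3 ≤ m) (ht : 1 ≤ t)
    (hi : i ≤ alph m - 2 ^ (m - 1)) (hj : j ≤ bet m - (alph m - 2 ^ (m - 1) + 1)) :
    cnt t (i + j + 1) + cnt t (alph m - i) + cnt t (bet m - j) ≤
      cnt t (alph m) + cnt t (bet m) + cnt t 1 := by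
  obtain ⟨n, rfl⟩ : ∃ n, m = n + 2 := ⟨m - 2, by omega⟩
  obtain ⟨u, rfl⟩ : ∃ u, t = u + 1 := ⟨t - 1, by omega⟩
  have hs := alph_add_bet n
  have hba := bet_le_alph n
  have hp : (2:ℕ) ^ (n+1) = 2 * 2 ^ n := by ring
  have e : n + 2 - 1 = n + 1 := by omega
  rw [e, alph_two] at hi hj
  rw [bet_two] at hj
  rw [alph_two, bet_two]
  clear e
  have small : ∀ j, j ≤ bet n →
      cnt (u + 1) (i + j + 1) + cnt (u+1) (2 ^ (n+1) + alph n - i) + cnt (u+1) (2 ^ n + bet n - j) ≤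
      cnt (u+1) (2 ^ (n+1) + alph n) + cnt (u+1) (2 ^ n + bet n) + cnt (u + 1) 1 := by
    intro j hj
    have hi' : i ≤ alph n := by omega
    rw [Nat.add_sub_assoc hi', Nat.add_sub_assoc hj, cnt_top (n+1) _ _ (by omega),
        cnt_top (n+1) _ _ (by omega), cnt_top n _ _ (by omega), cnt_top n _ _ (by omega)]
    have h1 := cnt_Q n u i j hi' hj
    simp only [Nat.add_sub_cancel] at *
    omega
  rcases Nat.lt_or_ge (bet n) j with h | h
  swap
  · exact small j h
  obtain ⟨x, rfl⟩ : ∃ x, j = bet n + x := ⟨j - bet n, by omega⟩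
  have h1 := small (bet n) le_rfl
  have e3 : i + (bet n + x) + 1 = i + bet n + 1 + x := by omega
  have e4 : 2 ^ n + bet n - (bet n + x) = 2 ^ n - x := by omega
  have e5 : 2 ^ n + bet n - bet n = 2 ^ n := by omega
  rw [e5] at h1
  rw [e3, e4]
  suffices hh : cnt (u+1) (i + bet n + 1 + x) + cnt (u+1) (2 ^ n - x) ≤
      cnt (u+1) (i + bet n + 1) + cnt (u+1) (2 ^ n) by omega
  rcases Nat.lt_or_ge (2 ^ n) (i + bet n + 1 + x) with h6 | h6
  swap
  · exact cnt_final n _ x _ h6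
  obtain ⟨z, hz⟩ : ∃ z, i + bet n + 1 + x = 2 ^ n + z := ⟨i + bet n + 1 + x - 2 ^ n, by omega⟩
  rw [hz, cnt_top n _ z (by omega)]
  have h7 := cnt_add z (2 ^ n - x) (u+1) (by omega)
  have e8 : z + (2 ^ n - x) = i + bet n + 1 := by omega
  rw [e8] at h7
  omega

/-- monomial code of degree `< d` -/
def monv (m : ℕ) (S : Finset ℕ) : Fin (2 ^ m) → ZMod 2 :=
  fun i => if ∀ j ∈ S, (i : ℕ).testBit j = true then 1 else 0

/-- span of the monomials of degree less than `d` -/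
def monCode (d m : ℕ) : Submodule (ZMod 2) (Fin (2 ^ m) → ZMod 2) :=
  Submodule.span (ZMod 2) {w | ∃ S : Finset ℕ, S ⊆ Finset.range m ∧ S.card < d ∧ w = monv m S}

theorem RM_le_monCode (r m : ℕ) : RMcode r m ≤ monCode (r + 1) m := by
  unfold RMcode
  rw [Submodule.span_le]
  rintro w ⟨f, hf, rfl⟩
  have key : (fun i : Fin (2 ^ m) => MvPolynomial.eval
      (fun j : Fin m => if Nat.testBit i.val j.val then (1 : ZMod 2) else 0) f) =
      ∑ s ∈ f.support, f.coeff s • monv m (s.support.map Fin.valEmbedding) := by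
    funext i
    rw [MvPolynomial.eval_eq, Finset.sum_apply]
    refine Finset.sum_congr rfl fun s _ => ?_
    simp only [Pi.smul_apply, smul_eq_mul, monv]
    congr 1
    split_ifs with h
    · refine Finset.prod_eq_one fun j hj => ?_
      rw [if_pos (h j.val (Finset.mem_map.2 ⟨j, hj, rfl⟩)), one_pow]
    · push Not at h
      obtain ⟨j, hj, hj2⟩ := h
      obtain ⟨j', hj', rfl⟩ := Finset.mem_map.1 hj
      refine Finset.prod_eq_zero hj' ?_
      rw [if_neg (by simpa using hj2), zero_pow]
      exact Finsupp.mem_support_iff.1 hj'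
  rw [SetLike.mem_coe, key]
  refine Submodule.sum_mem _ fun s hs => Submodule.smul_mem _ _ (Submodule.subset_span ?_)
  refine ⟨_, ?_, ?_, rfl⟩
  · intro j hj
    obtain ⟨j', hj', rfl⟩ := Finset.mem_map.1 hj
    simp
  · rw [Finset.card_map]
    have h1 := MvPolynomial.le_totalDegree hs
    have h2 : s.support.card ≤ s.sum fun _ e => e := by
      rw [Finsupp.sum, Finset.card_eq_sum_ones]
      exact Finset.sum_le_sum fun j hj => Nat.one_le_iff_ne_zero.2 (Finsupp.mem_support_iff.1 hj)
    omega

/-- lower-half index -/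
def ix0 (m : ℕ) (i : Fin (2 ^ m)) : Fin (2 ^ (m + 1)) :=
  ⟨i.val, by have := i.isLt; rw [pow_succ]; omega⟩

/-- upper-half index -/
def ix1 (m : ℕ) (i : Fin (2 ^ m)) : Fin (2 ^ (m + 1)) :=
  ⟨2 ^ m + i.val, by have := i.isLt; rw [pow_succ]; omega⟩

/-- lower-half restriction -/
def res0 (m : ℕ) := LinearMap.funLeft (ZMod 2) (ZMod 2) (ix0 m)

/-- upper-half restriction -/
def res1 (m : ℕ) := LinearMap.funLeft (ZMod 2) (ZMod 2) (ix1 m)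

theorem res0_monv_mem (m : ℕ) (S : Finset ℕ) (h : m ∈ S) : res0 m (monv (m + 1) S) = 0 := by
  funext i
  simp only [res0, LinearMap.funLeft_apply, monv, Pi.zero_apply]
  rw [if_neg]
  intro hh
  have := hh m h
  rw [ix0, Nat.testBit_lt_two_pow i.isLt] at this
  exact absurd this (by simp)

theorem res0_monv_not_mem (m : ℕ) (S : Finset ℕ) :
    res0 m (monv (m + 1) S) = monv m S := by
  funext i
  rfl

theorem res1_monv (m : ℕ) (S : Finset ℕ) (hS : S ⊆ Finset.range (m + 1)) :
    res1 m (monv (m + 1) S) = monv m (S.erase m) := by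
  funext i
  simp only [res1, LinearMap.funLeft_apply, monv, ix1]
  congr 1
  refine propext ⟨fun h j hj => ?_, fun h j hj => ?_⟩
  · have h1 := h j (Finset.mem_of_mem_erase hj)
    have h2 := Finset.mem_range.1 (hS (Finset.mem_of_mem_erase hj))
    have h3 := Finset.ne_of_mem_erase hj
    rwa [Nat.testBit_two_pow_add_gt (by omega)] at h1
  · have h2 := Finset.mem_range.1 (hS hj)
    by_cases hjm : j = m
    · subst hjm
      rw [Nat.testBit_two_pow_add_eq, Nat.testBit_lt_two_pow i.isLt]; rfl
    · rw [Nat.testBit_two_pow_add_gt (by omega)]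
      exact h j (Finset.mem_erase.2 ⟨hjm, hj⟩)

theorem sub_range (m : ℕ) (S : Finset ℕ) (hS : S ⊆ Finset.range (m + 1)) (h : m ∉ S) :
    S ⊆ Finset.range m := by
  intro j hj
  have h2 := Finset.mem_range.1 (hS hj)
  have : j ≠ m := by rintro rfl; exact h hj
  exact Finset.mem_range.2 (by omega)

theorem res0_mem (d m : ℕ) : (monCode d (m + 1)).map (res0 m) ≤ monCode d m := by
  rw [monCode, Submodule.map_span, Submodule.span_le]
  rintro _ ⟨_, ⟨S, hS, hc, rfl⟩, rfl⟩
  by_cases h : m ∈ S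
  · rw [res0_monv_mem m S h]; exact Submodule.zero_mem _
  · rw [res0_monv_not_mem]
    exact Submodule.subset_span ⟨S, sub_range m S hS h, hc, rfl⟩

theorem res1_mem (d m : ℕ) : (monCode d (m + 1)).map (res1 m) ≤ monCode d m := by
  rw [monCode, Submodule.map_span, Submodule.span_le]
  rintro _ ⟨_, ⟨S, hS, hc, rfl⟩, rfl⟩
  rw [res1_monv m S hS]
  exact Submodule.subset_span ⟨S.erase m,
    sub_range m _ ((Finset.erase_subset _ _).trans hS) (Finset.notMem_erase _ _),
    (Finset.card_erase_le).trans_lt hc, rfl⟩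

theorem diff_mem (d m : ℕ) : (monCode d (m + 1)).map (res1 m - res0 m) ≤ monCode (d - 1) m := by
  rw [monCode, Submodule.map_span, Submodule.span_le]
  rintro _ ⟨_, ⟨S, hS, hc, rfl⟩, rfl⟩
  rw [LinearMap.sub_apply, res1_monv m S hS]
  by_cases h : m ∈ S
  · rw [res0_monv_mem m S h, sub_zero]
    refine Submodule.subset_span ⟨S.erase m,
      sub_range m _ ((Finset.erase_subset _ _).trans hS) (Finset.notMem_erase _ _), ?_, rfl⟩
    have := Finset.card_pos.2 ⟨m, h⟩
    rw [Finset.card_erase_of_mem h]; omega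
  · rw [res0_monv_not_mem, Finset.erase_eq_of_notMem h, sub_self]
    exact Submodule.zero_mem _

theorem finrank_split {V W : Type} [AddCommGroup V] [Module (ZMod 2) V] [FiniteDimensional (ZMod 2) V]
    [AddCommGroup W] [Module (ZMod 2) W] (p q : V →ₗ[ZMod 2] W)
    (hpq : ∀ v, p v = 0 → q v = 0 → v = 0) (D : Submodule (ZMod 2) V) :
    finrank (ZMod 2) D = finrank (ZMod 2) (D.map p) +
      finrank (ZMod 2) ((D ⊓ LinearMap.ker p).map q) := by
  have h1 := LinearMap.finrank_range_add_finrank_ker (p.domRestrict D)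
  rw [LinearMap.range_domRestrict] at h1
  rw [← h1]
  congr 1
  let g : LinearMap.ker (p.domRestrict D) →ₗ[ZMod 2] W :=
    q ∘ₗ D.subtype ∘ₗ (LinearMap.ker (p.domRestrict D)).subtype
  have hg : Function.Injective g := by
    rw [injective_iff_map_eq_zero]
    rintro ⟨⟨v, hv⟩, hv2⟩ h
    have hv3 : p v = 0 := by simpa using hv2
    have h4 : q v = 0 := h
    have := hpq v hv3 h4
    subst this
    rfl
  rw [← LinearMap.finrank_range_of_inj hg]
  have : LinearMap.range g = (D ⊓ LinearMap.ker p).map q := by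
    ext w
    constructor
    · rintro ⟨⟨⟨v, hv⟩, hv2⟩, rfl⟩
      exact ⟨v, ⟨hv, by simpa using hv2⟩, rfl⟩
    · rintro ⟨v, ⟨hv, hv2⟩, rfl⟩
      exact ⟨⟨⟨v, hv⟩, by simpa using hv2⟩, rfl⟩
  rw [this]

theorem chi_split (m : ℕ) (D : Submodule (ZMod 2) (Fin (2 ^ (m + 1)) → ZMod 2)) :
    (chi (D.map (res0 m))).ncard + (chi (D.map (res1 m))).ncard ≤ (chi D).ncard := by
  have i0 : Function.Injective (ix0 m) := by
    intro a b h
    have := congrArg Fin.val h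
    exact Fin.ext this
  have i1 : Function.Injective (ix1 m) := by
    intro a b h
    have := congrArg Fin.val h
    simp only [ix1] at this
    exact Fin.ext (by omega)
  rw [← Set.ncard_image_of_injective _ i0, ← Set.ncard_image_of_injective _ i1,
    ← Set.ncard_union_eq]
  · apply Set.ncard_le_ncard
    · rintro _ (⟨i, ⟨_, ⟨c, hc, rfl⟩, h⟩, rfl⟩ | ⟨i, ⟨_, ⟨c, hc, rfl⟩, h⟩, rfl⟩)
      · exact ⟨c, hc, h⟩
      · exact ⟨c, hc, h⟩
    · exact Set.toFinite _
  · rw [Set.disjoint_left]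
    rintro _ ⟨i, _, rfl⟩ ⟨j, _, h⟩
    have := congrArg Fin.val h
    simp only [ix0, ix1] at this
    have := i.isLt
    omega

theorem chi_mono {n : ℕ} {D E : Submodule (ZMod 2) (Fin n → ZMod 2)} (h : D ≤ E) :
    (chi D).ncard ≤ (chi E).ncard := by
  apply Set.ncard_le_ncard _ (Set.toFinite _)
  rintro i ⟨c, hc, hi⟩
  exact ⟨c, h hc, hi⟩

theorem res_zero (m : ℕ) (v : Fin (2 ^ (m + 1)) → ZMod 2) (h0 : res0 m v = 0) (h1 : res1 m v = 0) :
    v = 0 := by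
  funext i
  by_cases h : i.val < 2 ^ m
  · have := congrFun h0 ⟨i.val, h⟩
    exact this
  · have hi := i.isLt
    have hp : (2:ℕ) ^ (m + 1) = 2 ^ m * 2 := pow_succ _ _
    have h2 : i.val - 2 ^ m < 2 ^ m := by omega
    have := congrFun h1 ⟨i.val - 2 ^ m, h2⟩
    have e : ix1 m ⟨i.val - 2 ^ m, h2⟩ = i := by
      apply Fin.ext
      simp only [ix1]; omega
    simp only [res1, LinearMap.funLeft_apply, e] at this
    exact this

theorem monCode_bound (m : ℕ) : ∀ (d : ℕ) (D : Submodule (ZMod 2) (Fin (2 ^ m) → ZMod 2)),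
    D ≤ monCode d m → finrank (ZMod 2) D ≤ cnt (m + 1 - d) (chi D).ncard := by
  induction m with
  | zero =>
    intro d D hD
    by_cases hb : D = ⊥
    · subst hb; simp
    have hd : d ≠ 0 := by
      rintro rfl
      apply hb
      rw [eq_bot_iff]
      refine hD.trans ?_
      simp [monCode]
    have e : 0 + 1 - d = 0 := by omega
    rw [e]
    obtain ⟨c, hc, hc0⟩ := Submodule.exists_mem_ne_zero_of_ne_bot hb
    obtain ⟨i, hi⟩ := Function.ne_iff.1 hc0
    have h1 : 1 ≤ (chi D).ncard := by
      rw [Nat.one_le_iff_ne_zero, Ne, Set.ncard_eq_zero (Set.toFinite _)]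
      exact Set.Nonempty.ne_empty ⟨i, c, hc, hi⟩
    have h2 : finrank (ZMod 2) D ≤ 1 := by
      have := Submodule.finrank_le D
      simpa using this
    have h3 : cnt 0 1 = 1 := by simp [cnt_succ, cnt_zero]
    have := cnt_mono 0 h1
    omega
  | succ m ih =>
    intro d D hD
    by_cases hd : d = 0
    · subst hd
      have : D = ⊥ := by
        rw [eq_bot_iff]
        refine hD.trans ?_
        simp [monCode]
      subst this
      simp
    have gen : ∀ p q : (Fin (2 ^ (m + 1)) → ZMod 2) →ₗ[ZMod 2] (Fin (2 ^ m) → ZMod 2),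
        (∀ v, p v = 0 → q v = 0 → v = 0) → D.map p ≤ monCode d m →
        (D ⊓ LinearMap.ker p).map q ≤ monCode (d - 1) m →
        (chi (D.map p)).ncard + (chi (D.map q)).ncard ≤ (chi D).ncard →
        (chi (D.map p)).ncard ≤ (chi (D.map q)).ncard →
        finrank (ZMod 2) D ≤ cnt (m + 1 + 1 - d) (chi D).ncard := by
      intro p q hpq hp hq hc hle
      rw [finrank_split p q hpq D]
      have h1 := ih d _ hp
      have h2 := ih (d-1) _ hq
      have h3 : (chi ((D ⊓ LinearMap.ker p).map q)).ncard ≤ (chi (D.map q)).ncard :=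
        chi_mono (Submodule.map_mono inf_le_left)
      have e1 : m + 1 - (d - 1) = m + 1 + 1 - d := by omega
      have e2 : m + 1 - d = m + 1 + 1 - d - 1 := by omega
      rw [e1] at h2
      rw [e2] at h1
      have h4 := cnt_mono (m + 1 + 1 - d) h3
      have h5 := cnt_mono (m + 1 + 1 - d) hc
      have h6 := cnt_add _ _ (m + 1 + 1 - d) hle
      omega
    have hc := chi_split m D
    rcases Nat.le_total (chi (D.map (res0 m))).ncard (chi (D.map (res1 m))).ncard with hle | hle
    · refine gen (res0 m) (res1 m) (res_zero m) ((Submodule.map_mono hD).trans (res0_mem d m)) ?_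
        hc hle
      rintro _ ⟨c, ⟨hc1, hc2⟩, rfl⟩
      apply diff_mem d m
      refine ⟨c, hD hc1, ?_⟩
      rw [LinearMap.sub_apply, LinearMap.mem_ker.1 hc2, sub_zero]
    · refine gen (res1 m) (res0 m) (fun v h1 h0 => res_zero m v h0 h1)
        ((Submodule.map_mono hD).trans (res1_mem d m)) ?_ (by omega) hle
      rintro _ ⟨c, ⟨hc1, hc2⟩, rfl⟩
      rw [← Submodule.neg_mem_iff]
      apply diff_mem d m
      refine ⟨c, hD hc1, ?_⟩
      rw [LinearMap.sub_apply, LinearMap.mem_ker.1 hc2, zero_sub]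

/-- indicator of the down-set of `k` -/
def downv (m k : ℕ) : Fin (2 ^ m) → ZMod 2 :=
  fun i => if ∀ j < m, (i : ℕ).testBit j = true → k.testBit j = true then 1 else 0

theorem downv_mem (r m k : ℕ) (hk : k < 2 ^ m) (hw : m - r ≤ bwt k) : downv m k ∈ RMcode r m := by
  classical
  refine Submodule.subset_span
    ⟨∏ j ∈ Finset.univ.filter (fun j : Fin m => ¬ k.testBit j.val = true),
      (1 - MvPolynomial.X j), ?_, ?_⟩
  · refine (MvPolynomial.totalDegree_finsetProd _ _).trans ?_
    have h1 : ∀ j ∈ Finset.univ.filter (fun j : Fin m => ¬ k.testBit j.val = true),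
        (1 - MvPolynomial.X j : MvPolynomial (Fin m) (ZMod 2)).totalDegree ≤ 1 := by
      intro j _
      refine (MvPolynomial.totalDegree_sub _ _).trans ?_
      simp
    refine (Finset.sum_le_sum h1).trans ?_
    rw [← Finset.card_eq_sum_ones]
    have h2 := bwt_card m k hk
    have h3 : ((Finset.range m).filter (fun j => k.testBit j = true)).card =
        (Finset.univ.filter (fun j : Fin m => k.testBit j.val = true)).card := by
      rw [Finset.card_filter, Finset.card_filter, Finset.sum_range]
    have h4 := Finset.card_filter_add_card_filter_not (s := (Finset.univ : Finset (Fin m)))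
      (fun j : Fin m => k.testBit j.val = true)
    rw [Finset.card_univ, Fintype.card_fin] at h4
    omega
  · funext i
    rw [map_prod]
    simp only [map_sub, map_one, MvPolynomial.eval_X, downv]
    split_ifs with h
    · symm
      refine Finset.prod_eq_one fun j hj => ?_
      have hj' := (Finset.mem_filter.1 hj).2
      rw [if_neg (fun hh => hj' (h j.val j.isLt hh)), sub_zero]
    · symm
      push Not at h
      obtain ⟨j, hj, h1, h2⟩ := h
      refine Finset.prod_eq_zero (i := ⟨j, hj⟩) ?_ ?_
      · simpa using h2
      · simp [h1]

theorem downv_ne (m k : ℕ) (i : Fin (2 ^ m)) (h : downv m k i ≠ 0) : i.val ≤ k := by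
  have h1 : ∀ j < m, (i : ℕ).testBit j = true → k.testBit j = true := by
    by_contra hh
    exact h (by rw [downv, if_neg hh])
  have h2 : i.val &&& k = i.val := by
    apply Nat.eq_of_testBit_eq
    intro j
    rw [Nat.testBit_and]
    by_cases hj : j < m
    · cases hb : i.val.testBit j
      · rfl
      · rw [h1 j hj hb]; rfl
    · have : i.val.testBit j = false := Nat.testBit_lt_two_pow
        (i.isLt.trans_le (Nat.pow_le_pow_right (by norm_num) (by omega)))
      rw [this]; rfl
  rw [← h2]
  exact Nat.and_le_right

theorem downv_self (m k : ℕ) (hk : k < 2 ^ m) : downv m k ⟨k, hk⟩ = 1 := by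
  rw [downv, if_pos]
  intro j _ h; exact h

theorem downv_indep (m : ℕ) (K : Finset ℕ) (hK : ∀ k ∈ K, k < 2 ^ m) :
    LinearIndependent (ZMod 2) (fun k : K => downv m k) := by
  rw [Fintype.linearIndependent_iff]
  intro g hg
  by_contra hne
  push Not at hne
  obtain ⟨k0, hk0⟩ := hne
  have hne' : (Finset.univ.filter (fun k : K => g k ≠ 0)).Nonempty := ⟨k0, by simpa using hk0⟩
  obtain ⟨k, hk, hmax⟩ := Finset.exists_max_image _ (fun k : K => (k : ℕ)) hne'
  have hgk := (Finset.mem_filter.1 hk).2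
  have hk2 := hK k k.2
  have := congrFun hg ⟨k, hk2⟩
  rw [Finset.sum_apply, Finset.sum_eq_single k] at this
  · rw [Pi.smul_apply, downv_self, smul_eq_mul, mul_one] at this
    exact hgk this
  · intro b _ hb
    rw [Pi.smul_apply, smul_eq_mul]
    by_contra h
    have h1 : g b ≠ 0 := left_ne_zero_of_mul h
    have h2 := downv_ne m b _ (right_ne_zero_of_mul h)
    have h3 := hmax b (by simpa using h1)
    simp only at h2 h3
    exact hb (Subtype.ext (le_antisymm h3 h2))
  · intro h; exact absurd (Finset.mem_univ _) h

theorem Ucap_RM (r m s : ℕ) (hs : s ≤ 2 ^ m) : Ucap (RMcode r m) s = cnt (m - r) s := by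
  have ub : ∀ d ∈ {d : ℕ | ∃ D : Submodule (ZMod 2) (Fin (2 ^ m) → ZMod 2), D ≤ RMcode r m ∧
      (chi D).ncard ≤ s ∧ finrank (ZMod 2) ↥D = d}, d ≤ cnt (m - r) s := by
    rintro d ⟨D, hD, hc, rfl⟩
    have h1 := monCode_bound m (r + 1) D (hD.trans (RM_le_monCode r m))
    have e : m + 1 - (r + 1) = m - r := by omega
    rw [e] at h1
    exact h1.trans (cnt_mono _ hc)
  apply le_antisymm
  · refine csSup_le ⟨0, ⊥, bot_le, ?_, by simp⟩ ub
    simp [chi]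
  · refine le_csSup ⟨_, ub⟩ ?_
    let K := (Finset.range s).filter (fun k => m - r ≤ bwt k)
    have hK : ∀ k ∈ K, k < s ∧ m - r ≤ bwt k := by
      intro k hk
      simpa [K] using hk
    refine ⟨Submodule.span (ZMod 2) (Set.range fun k : K => downv m k), ?_, ?_, ?_⟩
    · rw [Submodule.span_le]
      rintro _ ⟨k, rfl⟩
      have := hK k k.2
      exact downv_mem r m k (by omega) this.2
    · have hsub : chi (Submodule.span (ZMod 2) (Set.range fun k : K => downv m k)) ⊆
          {i | i.val < s} := by
        rintro i ⟨c, hc, hi⟩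
        by_contra hlt
        apply hi
        have hle : Submodule.span (ZMod 2) (Set.range fun k : K => downv m k) ≤
            LinearMap.ker (LinearMap.proj (R := ZMod 2) (φ := fun _ : Fin (2 ^ m) => ZMod 2) i) := by
          rw [Submodule.span_le]
          rintro _ ⟨k, rfl⟩
          rw [SetLike.mem_coe, LinearMap.mem_ker, LinearMap.proj_apply]
          by_contra h
          have h1 := downv_ne m k i h
          have h2 := hK k k.2
          simp only [Set.mem_ofPred_eq] at hlt
          omega
        exact hle hc
      refine (Set.ncard_le_ncard hsub (Set.toFinite _)).trans ?_
      rw [← Set.ncard_image_of_injective _ Fin.val_injective]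
      have : (Fin.val '' {i : Fin (2 ^ m) | i.val < s}) ⊆ (Finset.range s : Set ℕ) := by
        rintro _ ⟨i, hi, rfl⟩
        simpa using hi
      refine (Set.ncard_le_ncard this (Finset.finite_toSet _)).trans ?_
      rw [Set.ncard_coe_finset, Finset.card_range]
    · rw [finrank_span_eq_card (downv_indep m K fun k hk => by have := hK k hk; omega)]
      rw [cnt, Nat.count_eq_card_filter_range, Fintype.card_coe]

/-- Lemma `U_ineq`: for `m ≥ 3`, `0 ≤ r ≤ m−1`,
`0 ≤ i ≤ α − 2^{m−1}` and `0 ≤ j ≤ β − (α − 2^{m−1} + 1)`,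
`(U_α − U_{α−i}) + (U_β − U_{β−j}) ≥ U_{i+j+1} − U_1`. -/
theorem stmt10 (r m : ℕ) (hm : 3 ≤ m) (hr : r ≤ m - 1) :
    ∀ i j : ℕ, i ≤ alph m - 2 ^ (m - 1) → j ≤ bet m - (alph m - 2 ^ (m - 1) + 1) →
      ((Ucap (RMcode r m) (alph m) : ℤ) - Ucap (RMcode r m) (alph m - i)) +
        ((Ucap (RMcode r m) (bet m) : ℤ) - Ucap (RMcode r m) (bet m - j)) ≥
        (Ucap (RMcode r m) (i + j + 1) : ℤ) - Ucap (RMcode r m) 1 := by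
  intro i j hi hj
  have hs := alph_add_bet m
  have hpos := Nat.two_pow_pos (m - 1)
  have hba := bet_le_alph m
  rw [Ucap_RM r m _ (by omega), Ucap_RM r m _ (by omega), Ucap_RM r m _ (by omega),
    Ucap_RM r m _ (by omega), Ucap_RM r m _ (by omega), Ucap_RM r m _ Nat.one_le_two_pow]
  have := cnt_main m (m - r) i j hm (by omega) hi hj
  omega
end

section
/- Let m ≥ 3 and 0 ≤ r ≤ m−1. Then U_{α^(m)}(RM(r,m)) + U_{β^(m)}(RM(r,m)) + U_1(RM(r,m)) = k(r,m) − τ(r,m). -/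
open Module

/-- `k(r,m) = ∑_{j=0}^{r} C(m,j)`, the dimension of `RM(r,m)`. -/
def kRM (r m : ℕ) : ℕ := ∑ j ∈ Finset.range (r + 1), Nat.choose m j

/-- The claimed value `τ(r,m)` of the trelliswidth of `RM(r,m)`. -/
def tauRM (r m : ℕ) : ℕ :=
  if 2 * r + 1 ≤ m then ∑ j ∈ Finset.range (r + 1), Nat.choose (m - (2 * j + 1)) (r - j)
  else 1 + ∑ j ∈ Finset.range (m - r), Nat.choose (m - (2 * j + 1)) (r - j)

/-! ### Binary weights and counting -/

def wt (n : ℕ) : ℕ := if n = 0 then 0 else n % 2 + wt (n / 2)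
decreasing_by omega

lemma wt_zero : wt 0 = 0 := by rw [wt]; simp

lemma wt_rec (n : ℕ) : wt n = n % 2 + wt (n / 2) := by
  by_cases h : n = 0
  · subst h; simp [wt_zero]
  · conv_lhs => rw [wt]
    simp [h]

lemma wt_two_mul (n : ℕ) : wt (2 * n) = wt n := by
  rw [wt_rec, show 2 * n % 2 = 0 by omega, show 2 * n / 2 = n by omega, zero_add]

lemma wt_two_mul_add_one (n : ℕ) : wt (2 * n + 1) = wt n + 1 := by
  rw [wt_rec, show (2 * n + 1) % 2 = 1 by omega, show (2 * n + 1) / 2 = n by omega, add_comm]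

/-- number of `i < s` with binary weight at least `t` -/
def NN : ℕ → ℕ → ℕ
  | 0, _ => 0
  | s + 1, t => NN s t + if t ≤ wt s then 1 else 0

lemma NN_zero (t : ℕ) : NN 0 t = 0 := rfl
lemma NN_succ (s t : ℕ) : NN (s + 1) t = NN s t + if t ≤ wt s then 1 else 0 := rfl

lemma NN_t_zero (s : ℕ) : NN s 0 = s := by
  induction s with
  | zero => rfl
  | succ s ih => rw [NN_succ, ih]; simp

lemma NN_one (t : ℕ) : NN 1 t = if t = 0 then 1 else 0 := by
  rw [NN_succ, NN_zero, wt_zero]; simp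

lemma NN_two_mul (n t : ℕ) : NN (2 * n) t = NN n t + NN n (t - 1) := by
  induction n with
  | zero => simp [NN_zero]
  | succ n ih =>
    rw [show 2 * (n + 1) = 2 * n + 1 + 1 by ring, NN_succ, NN_succ, ih, NN_succ, NN_succ,
      wt_two_mul, wt_two_mul_add_one]
    have : (t ≤ wt n + 1) ↔ (t - 1 ≤ wt n) := by omega
    simp only [this]
    ring

lemma NN_two_mul_add_one (n t : ℕ) : NN (2 * n + 1) t = NN (n + 1) t + NN n (t - 1) := by
  rw [NN_succ, NN_two_mul, NN_succ, wt_two_mul]; ring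

lemma NN_superadd (n : ℕ) : ∀ a b t : ℕ, a + b ≤ n → b ≤ a →
    NN a t + NN b (t - 1) ≤ NN (a + b) t := by
  induction n with
  | zero =>
    intro a b t h1 h2
    obtain rfl : a = 0 := by omega
    obtain rfl : b = 0 := by omega
    simp [NN_zero]
  | succ n ih =>
    intro a b t h1 h2
    obtain ⟨p, hp⟩ := Nat.even_or_odd' a
    obtain ⟨q, hq⟩ := Nat.even_or_odd' b
    rcases hp with rfl | rfl <;> rcases hq with rfl | rfl
    · rcases Nat.eq_zero_or_pos p with rfl | hp0
      · obtain rfl : q = 0 := by omega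
        simp [NN_zero]
      have e1 := ih p q t (by omega) (by omega)
      have e2 := ih p q (t - 1) (by omega) (by omega)
      rw [show 2 * p + 2 * q = 2 * (p + q) by ring, NN_two_mul, NN_two_mul, NN_two_mul]
      omega
    · have e1 := ih p (q + 1) t (by omega) (by omega)
      have e2 := ih p q (t - 1) (by omega) (by omega)
      rw [show 2 * p + (2 * q + 1) = 2 * (p + q) + 1 by ring, NN_two_mul, NN_two_mul_add_one,
        NN_two_mul_add_one]
      rw [← add_assoc] at e1
      omega
    · rcases Nat.eq_zero_or_pos p with rfl | hp0
      · obtain rfl : q = 0 := by omega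
        simp [NN_zero]
      have e1 := ih (p + 1) q t (by omega) (by omega)
      have e2 := ih p q (t - 1) (by omega) (by omega)
      rw [show 2 * p + 1 + 2 * q = 2 * (p + q) + 1 by ring, NN_two_mul, NN_two_mul_add_one,
        NN_two_mul_add_one]
      rw [show p + 1 + q = p + q + 1 by ring] at e1
      omega
    · rw [show 2 * p + 1 + (2 * q + 1) = 2 * (p + q + 1) by ring, NN_two_mul, NN_two_mul_add_one,
        NN_two_mul_add_one]
      rcases (show q ≤ p by omega).eq_or_lt with rfl | hlt
      · rw [← two_mul, NN_two_mul_add_one, NN_two_mul_add_one]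
      · have e1 := ih (p + 1) q t (by omega) (by omega)
        have e2 := ih p (q + 1) (t - 1) (by omega) (by omega)
        rw [show p + 1 + q = p + q + 1 by ring] at e1
        rw [← add_assoc] at e2
        have h3 := NN_succ q (t - 1)
        have h4 := NN_succ q (t - 1 - 1)
        have h5 : (if t - 1 ≤ wt q then 1 else 0) ≤ (if t - 1 - 1 ≤ wt q then 1 else 0) := by
          split_ifs <;> omega
        omega

/-! ### The trelliswidth recursion -/

def TT (m t : ℕ) : ℕ := if t ≤ m then tauRM (m - t) m else 0

lemma TT_t_zero (m : ℕ) : TT m 0 = 1 := by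
  simp [TT, tauRM]
  intro h; omega

lemma TT_step (m t : ℕ) : TT (m + 2) (t + 1) = Nat.choose (m + 1) t + TT m t := by
  unfold TT
  rcases lt_trichotomy t (m + 1) with h | h | h
  · rw [if_pos (by omega), if_pos (by omega)]
    obtain ⟨r, rfl⟩ : ∃ r, m = r + t := ⟨m - t, by omega⟩
    rw [show r + t + 2 - (t + 1) = r + 1 by omega, show r + t - t = r by omega]
    have hc : Nat.choose (r + t + 1) t = Nat.choose (r + t + 2 - (2 * 0 + 1)) (r + 1 - 0) := by
      rw [show r + t + 2 - (2 * 0 + 1) = r + t + 1 by omega, ← Nat.choose_symm (by omega)]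
      congr 1; omega
    have hs : ∀ j, Nat.choose (r + t + 2 - (2 * (j + 1) + 1)) (r + 1 - (j + 1))
        = Nat.choose (r + t - (2 * j + 1)) (r - j) := by
      intro j; congr 1 <;> omega
    unfold tauRM
    by_cases hb : 2 * r + 1 ≤ r + t
    · rw [if_pos (by omega), if_pos hb, Finset.sum_range_succ']
      simp only [hs]; rw [hc]; ring
    · rw [if_neg (by omega), if_neg hb, show r + t + 2 - (r + 1) = t + 1 by omega,
        show r + t - r = t by omega, Finset.sum_range_succ']
      simp only [hs]; rw [hc]; ring
  · subst h
    rw [if_pos (by omega), if_neg (by omega)]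
    simp [tauRM]
  · rw [if_neg (by omega), if_neg (by omega), Nat.choose_eq_zero_of_lt h]

lemma TT_zero_succ (t : ℕ) : TT 0 (t + 1) = 0 := by simp [TT]

lemma TT_one_one : TT 1 1 = 1 := by simp [TT, tauRM]

lemma TT_one_two (t : ℕ) : TT 1 (t + 2) = 0 := by simp [TT]

lemma TT_pascal (m : ℕ) : ∀ t, TT (m + 1) (t + 1) + (if 2 * (t + 1) ≤ m then 1 else 0)
    = TT m (t + 1) + TT m t := by
  induction m using Nat.strong_induction_on with
  | _ m ih =>
  intro t
  match m, ih with
  | 0, _ =>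
    rcases t with _ | t
    · simp [TT_t_zero, TT_zero_succ, TT_one_one]
    · simp [TT_zero_succ, TT_one_two]
  | 1, _ =>
    rw [TT_step]
    rcases t with _ | _ | t
    · simp [TT_t_zero, TT_one_one]
    · simp [TT_zero_succ, TT_one_two, TT_one_one]
    · rw [TT_zero_succ, TT_one_two, TT_one_two, Nat.choose_eq_zero_of_lt (by omega),
        if_neg (by omega)]
  | m + 2, ih =>
    rw [show m + 2 + 1 = (m + 1) + 2 by ring, TT_step, TT_step]
    rcases t with _ | s
    · simp [TT_t_zero]
    · rw [TT_step]
      have h := ih m (by omega) s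
      have hi : (2 * (s + 1 + 1) ≤ m + 2) ↔ (2 * (s + 1) ≤ m) := by omega
      simp only [hi]
      rw [show m + 1 + 1 = (m + 1).succ from rfl, Nat.choose_succ_succ]
      simp only [Nat.succ_eq_add_one]
      omega

/-! ### Dimension -/

lemma NN_pow_succ (m t : ℕ) : NN (2 ^ (m + 1)) t = NN (2 ^ m) t + NN (2 ^ m) (t - 1) := by
  rw [pow_succ, mul_comm, NN_two_mul]

lemma NN_pow_gt (m : ℕ) : ∀ t, m < t → NN (2 ^ m) t = 0 := by
  induction m with
  | zero => intro t ht; rw [pow_zero, NN_one, if_neg (by omega)]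
  | succ m ih => intro t ht; rw [NN_pow_succ, ih _ (by omega), ih _ (by omega)]

lemma NN_pow_step (m : ℕ) : ∀ t, NN (2 ^ m) t = NN (2 ^ m) (t + 1) + Nat.choose m t := by
  induction m with
  | zero =>
    intro t
    rcases t with _ | t
    · simp [NN_one]
    · simp [NN_one]
  | succ m ih =>
    intro t
    rw [NN_pow_succ, NN_pow_succ]
    rcases t with _ | t
    · have := ih 0
      simp at this ⊢
      omega
    · have h1 := ih t
      have h2 := ih (t + 1)
      rw [Nat.choose_succ_succ]
      simp only [Nat.succ_eq_add_one, Nat.add_sub_cancel] at *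
      omega

lemma kRM_eq (m t : ℕ) (r : ℕ) (h : r + t = m) : kRM r m = NN (2 ^ m) t := by
  induction r generalizing t with
  | zero =>
    obtain rfl : t = m := by omega
    rw [NN_pow_step, NN_pow_gt _ _ (by omega)]
    simp [kRM]
  | succ r ih =>
    have := ih (t + 1) (by omega)
    rw [NN_pow_step, ← this]
    unfold kRM
    rw [Finset.sum_range_succ _ (r + 1)]
    congr 1
    rw [← Nat.choose_symm (by omega : r + 1 ≤ m)]
    congr 1; omega

/-! ### The alternating numbers -/

lemma two_pow_mod_three (m : ℕ) : 2 ^ m % 3 = if m % 2 = 0 then 1 else 2 := by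
  induction m with
  | zero => rfl
  | succ m ih =>
    rw [pow_succ, Nat.mul_mod, ih]
    split_ifs <;> omega

lemma bet_succ (m : ℕ) : bet (m + 1) = 2 * bet m + m % 2 := by
  have h := two_pow_mod_three m
  unfold bet
  rw [pow_succ]
  split_ifs at h <;> omega

lemma wt_bet (m : ℕ) : wt (bet m) = m / 2 := by
  induction m using Nat.strong_induction_on with
  | _ m ih =>
  match m, ih with
  | 0, _ => simp [bet, wt_zero]
  | 1, _ => simp [bet, wt_zero]
  | m + 2, ih =>
    have h := ih m (by omega)
    rw [show m + 2 = (m + 1) + 1 by ring, bet_succ, bet_succ]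
    rcases Nat.mod_two_eq_zero_or_one m with h0 | h0
    · rw [h0, show (m + 1) % 2 = 1 by omega, wt_two_mul_add_one, add_zero, wt_two_mul, h]
      omega
    · rw [h0, show (m + 1) % 2 = 0 by omega, add_zero, wt_two_mul, wt_two_mul_add_one, h]
      omega

lemma NN_bet_succ (m t : ℕ) : NN (bet (m + 1)) (t + 1) = NN (bet m) (t + 1) + NN (bet m) t
    + if m % 2 = 1 ∧ t + 1 ≤ m / 2 then 1 else 0 := by
  rw [bet_succ]
  rcases Nat.mod_two_eq_zero_or_one m with h0 | h0
  · rw [h0, add_zero, NN_two_mul]; simp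
  · rw [h0, NN_two_mul_add_one, NN_succ, wt_bet]; simp; ring

lemma main_count (m : ℕ) : ∀ t, NN (bet (m + 1)) t + NN (bet m) t + TT m t = NN (2 ^ m) t := by
  induction m with
  | zero =>
    intro t
    rcases t with _ | t
    · simp [bet, NN_zero, TT_t_zero, NN_t_zero]
    · rw [TT_zero_succ, NN_pow_gt _ _ (by omega)]; simp [bet, NN_zero]
  | succ m ih =>
    intro t
    rcases t with _ | t
    · rw [NN_t_zero, NN_t_zero, NN_t_zero, TT_t_zero]
      have h := two_pow_mod_three (m + 1)
      unfold bet
      rw [pow_succ 2 (m + 1)]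
      split_ifs at h <;> omega
    · rw [NN_bet_succ, NN_pow_succ, Nat.add_sub_cancel]
      have h0 := NN_bet_succ m t
      have h1 := ih t
      have h2 := ih (t + 1)
      have h3 := TT_pascal m t
      have h4 : ((if (m + 1) % 2 = 1 ∧ t + 1 ≤ (m + 1) / 2 then 1 else 0)
          + if m % 2 = 1 ∧ t + 1 ≤ m / 2 then 1 else 0) = if 2 * (t + 1) ≤ m then 1 else 0 := by
        split_ifs <;> omega
      omega

/-! ### Upper bound -/

abbrev VV (m : ℕ) := (Fin m → Bool) → ZMod 2

def restr (m : ℕ) (b : Bool) : VV (m + 1) →ₗ[ZMod 2] VV m :=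
  LinearMap.funLeft (ZMod 2) (ZMod 2) (fun x : Fin m → Bool => (Fin.cons b x : Fin (m + 1) → Bool))

lemma restr_apply (m : ℕ) (b : Bool) (f : VV (m + 1)) (x : Fin m → Bool) :
    restr m b f x = f (Fin.cons b x) := rfl

def RR : (m : ℕ) → ℕ → Submodule (ZMod 2) (VV m)
  | 0, t => if t = 0 then ⊤ else ⊥
  | m + 1, t => (RR m t).comap (restr m false + restr m true) ⊓
      (RR m (t - 1)).comap (restr m false)

lemma RR_succ (m t : ℕ) : RR (m + 1) t = (RR m t).comap (restr m false + restr m true) ⊓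
      (RR m (t - 1)).comap (restr m false) := rfl

lemma mono_mem (m : ℕ) : ∀ (t : ℕ) (S : Fin m → Bool),
    (∑ j, if S j then 1 else 0) + t ≤ m →
    (fun x => ∏ j, if S j then (if x j then 1 else 0) else 1 : VV m) ∈ RR m t := by
  induction m with
  | zero =>
    intro t S h
    have : t = 0 := by simpa using h
    simp [RR, this]
  | succ m ih =>
    intro t S h
    rw [Fin.sum_univ_succ] at h
    have hle : (∑ j : Fin m, if S j.succ then 1 else 0) ≤ m := by
      calc (∑ j : Fin m, if S j.succ then 1 else 0) ≤ ∑ j : Fin m, 1 :=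
            Finset.sum_le_sum (fun j _ => by split_ifs <;> omega)
        _ = m := by simp
    rw [RR_succ, Submodule.mem_inf, Submodule.mem_comap, Submodule.mem_comap]
    have key : ∀ b, restr m b (fun x => ∏ j, if S j then (if x j then 1 else 0) else 1 : VV (m+1))
        = fun x => (if S 0 then (if b then 1 else 0) else 1) *
          ∏ j : Fin m, if S j.succ then (if x j then 1 else 0) else 1 := by
      intro b; funext x
      rw [restr_apply, Fin.prod_univ_succ]; simp
    rw [LinearMap.add_apply, key, key]
    by_cases h0 : S 0 = true
    · simp only [h0, if_true] at h ⊢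
      constructor
      · have := ih t (fun j => S j.succ) (by omega)
        convert this using 1
        funext x; simp
      · convert Submodule.zero_mem _ using 1
        funext x; simp
    · simp only [h0] at h ⊢
      constructor
      · convert Submodule.zero_mem _ using 1
        funext x
        simp only [Pi.add_apply, Pi.zero_apply]
        exact CharTwo.add_self_eq_zero _
      · have := ih (t - 1) (fun j => S j.succ) (by simp only [Bool.false_eq_true, if_false, zero_add] at h; omega)
        convert this using 1
        funext x; simp

lemma upper (m : ℕ) : ∀ (t : ℕ) (J : Finset (Fin m → Bool)) (D : Submodule (ZMod 2) (VV m)),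
    D ≤ RR m t → (∀ f ∈ D, ∀ x, x ∉ J → f x = 0) → finrank (ZMod 2) D ≤ NN J.card t := by
  induction m with
  | zero =>
    intro t J D hD hJ
    by_cases hbot : D = ⊥
    · subst hbot; simp
    have ht : t = 0 := by
      by_contra h
      simp only [RR, if_neg h] at hD
      exact hbot (le_bot_iff.mp hD)
    subst ht
    rw [NN_t_zero]
    have h1 : finrank (ZMod 2) D ≤ 1 := by
      refine (Submodule.finrank_le D).trans ?_
      simp
    refine h1.trans ?_
    rw [Nat.one_le_iff_ne_zero]
    intro hc
    rw [Finset.card_eq_zero] at hc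
    subst hc
    apply hbot
    rw [Submodule.eq_bot_iff]
    intro f hf
    funext x
    exact hJ f hf x (by simp)
  | succ m ih =>
    intro t J D hD hJ
    let J' : Bool → Finset (Fin m → Bool) := fun b =>
      Finset.univ.filter (fun x => (Fin.cons b x : Fin (m + 1) → Bool) ∈ J)
    have hcard : J.card = (J' false).card + (J' true).card := by
      have e : ∀ b, ((J' b).map ⟨fun x => (Fin.cons b x : Fin (m + 1) → Bool),
          Fin.cons_right_injective (α := fun _ => Bool) b⟩) = J.filter (fun x => x 0 = b) := by
        intro b
        ext x
        simp only [Finset.mem_map, Finset.mem_filter, Function.Embedding.coeFn_mk, J',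
          Finset.mem_univ, true_and]
        constructor
        · rintro ⟨y, hy, rfl⟩; exact ⟨hy, by simp⟩
        · rintro ⟨hx, rfl⟩
          exact ⟨Fin.tail x, by rwa [Fin.cons_self_tail], Fin.cons_self_tail x⟩
      rw [← Finset.card_map ⟨fun x => (Fin.cons false x : Fin (m + 1) → Bool),
          Fin.cons_right_injective (α := fun _ => Bool) false⟩,
        ← Finset.card_map ⟨fun x => (Fin.cons true x : Fin (m + 1) → Bool),
          Fin.cons_right_injective (α := fun _ => Bool) true⟩, e, e]
      rw [← Finset.card_filter_add_card_filter_not (s := J) (fun x => x 0 = false)]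
      simp
    have hcard2 : J.card = (J' false ∪ J' true).card + (J' false ∩ J' true).card := by
      rw [hcard, Finset.card_union_add_card_inter]
    let φ : D →ₗ[ZMod 2] VV m := (restr m false + restr m true).comp D.subtype
    let ψ : LinearMap.ker φ →ₗ[ZMod 2] VV m :=
      ((restr m false).comp D.subtype).comp (LinearMap.ker φ).subtype
    have hker : ∀ f : LinearMap.ker φ, ∀ x : Fin m → Bool,
        (f : D).1 (Fin.cons false x) = (f : D).1 (Fin.cons true x) := by
      intro f x
      have := congrFun (LinearMap.mem_ker.mp f.2) x
      simp only [φ, LinearMap.comp_apply, LinearMap.add_apply, Pi.add_apply, restr_apply,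
        Submodule.subtype_apply, Pi.zero_apply] at this
      exact CharTwo.add_eq_zero.mp this
    have hψ : Function.Injective ψ := by
      rw [injective_iff_map_eq_zero]
      intro f hf
      apply Subtype.ext
      apply Subtype.ext
      funext x
      have h0 : ∀ y, (f : D).1 (Fin.cons false y) = 0 := fun y => congrFun hf y
      rw [← Fin.cons_self_tail x]
      rcases hb : x 0 with _ | _
      · exact h0 _
      · rw [← hker]; exact h0 _
    have h1 : finrank (ZMod 2) (LinearMap.range φ) ≤ NN (J' false ∪ J' true).card t := by
      apply ih
      · rintro _ ⟨f, rfl⟩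
        exact (hD f.2).1
      · rintro _ ⟨f, rfl⟩ x hx
        simp only [J', Finset.mem_union, Finset.mem_filter, Finset.mem_univ, true_and,
          not_or] at hx
        change f.1 (Fin.cons false x) + f.1 (Fin.cons true x) = 0
        rw [hJ _ f.2 _ hx.1, hJ _ f.2 _ hx.2, add_zero]
    have h2 : finrank (ZMod 2) (LinearMap.ker φ) ≤ NN (J' false ∩ J' true).card (t - 1) := by
      rw [← LinearMap.finrank_range_of_inj hψ]
      apply ih
      · rintro _ ⟨f, rfl⟩
        exact (hD f.1.2).2
      · rintro _ ⟨f, rfl⟩ x hx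
        simp only [J', Finset.mem_inter, Finset.mem_filter, Finset.mem_univ, true_and,
          not_and_or] at hx
        change f.1.1 (Fin.cons false x) = 0
        rcases hx with hx | hx
        · exact hJ _ f.1.2 _ hx
        · rw [hker]; exact hJ _ f.1.2 _ hx
    have h3 := LinearMap.finrank_range_add_finrank_ker φ
    have h4 := NN_superadd _ (J' false ∪ J' true).card (J' false ∩ J' true).card t le_rfl
      (Finset.card_le_card (Finset.inter_subset_left.trans Finset.subset_union_left))
    rw [hcard2]
    omega

/-! ### Transfer to `Fin (2 ^ m)` -/

def bits (m : ℕ) (i : Fin (2 ^ m)) : Fin m → Bool := fun j => Nat.testBit i.val j.val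

lemma bits_inj (m : ℕ) : Function.Injective (bits m) := by
  intro a b h
  apply Fin.ext
  apply Nat.eq_of_testBit_eq
  intro j
  by_cases hj : j < m
  · exact congrFun h ⟨j, hj⟩
  · have hp : 2 ^ m ≤ 2 ^ j := Nat.pow_le_pow_right (by norm_num) (by omega)
    rw [Nat.testBit_lt_two_pow (a.2.trans_le hp), Nat.testBit_lt_two_pow (b.2.trans_le hp)]

lemma bits_bij (m : ℕ) : Function.Bijective (bits m) := by
  rw [Fintype.bijective_iff_injective_and_card]
  exact ⟨bits_inj m, by simp⟩

noncomputable def bitsEquiv (m : ℕ) : Fin (2 ^ m) ≃ (Fin m → Bool) :=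
  Equiv.ofBijective _ (bits_bij m)

noncomputable def toVV (m : ℕ) : (Fin (2 ^ m) → ZMod 2) ≃ₗ[ZMod 2] VV m :=
  LinearEquiv.funCongrLeft (ZMod 2) (ZMod 2) (bitsEquiv m).symm

lemma toVV_apply (m : ℕ) (w : Fin (2 ^ m) → ZMod 2) (x) :
    toVV m w x = w ((bitsEquiv m).symm x) := rfl

lemma RMcode_le (r m t : ℕ) (h : r + t = m) : RMcode r m ≤ (RR m t).comap (toVV m).toLinearMap := by
  unfold RMcode
  rw [Submodule.span_le]
  rintro w ⟨f, hf, rfl⟩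
  rw [SetLike.mem_coe, Submodule.mem_comap]
  have : (toVV m).toLinearMap (fun i => MvPolynomial.eval
        (fun j : Fin m => if Nat.testBit i.val j.val then 1 else 0) f)
      = ∑ e ∈ f.support, MvPolynomial.coeff e f •
        (fun x => ∏ j, if decide (e j ≠ 0) then (if x j then 1 else 0) else 1 : VV m) := by
    funext x
    change MvPolynomial.eval _ f = _
    rw [MvPolynomial.eval_eq', Finset.sum_apply]
    apply Finset.sum_congr rfl
    intro e _
    rw [Pi.smul_apply, smul_eq_mul]
    congr 1
    apply Finset.prod_congr rfl
    intro j _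
    have hx : Nat.testBit ((bitsEquiv m).symm x).val j.val = x j :=
      congrFun ((bitsEquiv m).apply_symm_apply x) j
    rw [hx]
    by_cases he : e j = 0 <;> cases x j <;> simp [he]
  rw [this]
  apply Submodule.sum_mem
  intro e he
  apply Submodule.smul_mem
  apply mono_mem
  have h1 := MvPolynomial.le_totalDegree he
  have h2 : (∑ j, if decide (e j ≠ 0) = true then 1 else 0) ≤ e.sum fun _ n => n := by
    rw [Finsupp.sum_fintype _ _ (fun _ => rfl)]
    apply Finset.sum_le_sum
    intro j _
    simp only [decide_eq_true_eq]
    split_ifs <;> omega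
  omega

lemma NN_mono {a b t : ℕ} (h : a ≤ b) : NN a t ≤ NN b t := by
  induction h with
  | refl => exact le_rfl
  | step _ ih => exact ih.trans (by rw [NN_succ]; omega)

lemma dim_le (r m t s : ℕ) (h : r + t = m) (D : Submodule (ZMod 2) (Fin (2 ^ m) → ZMod 2))
    (hD : D ≤ RMcode r m) (hs : (chi D).ncard ≤ s) : finrank (ZMod 2) D ≤ NN s t := by
  classical
  let J : Finset (Fin m → Bool) := (chi D).toFinset.map (bitsEquiv m).toEmbedding
  have hJ : J.card = (chi D).ncard := by
    rw [Finset.card_map, Set.ncard_eq_toFinset_card']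
  have := upper m t J (D.map (toVV m).toLinearMap)
    (Submodule.map_le_iff_le_comap.mpr (hD.trans (RMcode_le r m t h))) (by
      rintro _ ⟨f, hf, rfl⟩ x hx
      by_contra hne
      apply hx
      simp only [J, Finset.mem_map_equiv, Set.mem_toFinset]
      exact ⟨f, hf, hne⟩)
  rw [LinearEquiv.finrank_map_eq, hJ] at this
  exact this.trans (NN_mono hs)

/-! ### Lower bound -/

noncomputable def gvec (m : ℕ) (i : ℕ) : Fin (2 ^ m) → ZMod 2 :=
  fun x => MvPolynomial.eval (fun j : Fin m => if Nat.testBit x.val j.val then 1 else 0)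
    (∏ j ∈ Finset.univ.filter (fun j : Fin m => Nat.testBit i j.val = false),
      (1 + MvPolynomial.X j : MvPolynomial (Fin m) (ZMod 2)))

lemma gvec_apply (m i : ℕ) (x : Fin (2 ^ m)) :
    gvec m i x = ∏ j ∈ Finset.univ.filter (fun j : Fin m => Nat.testBit i j.val = false),
      (1 + if Nat.testBit x.val j.val then 1 else 0) := by
  simp [gvec, MvPolynomial.eval_prod]

lemma gvec_self (m : ℕ) (i : Fin (2 ^ m)) : gvec m i i = 1 := by
  rw [gvec_apply]
  apply Finset.prod_eq_one
  intro j hj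
  simp only [Finset.mem_filter, Finset.mem_univ, true_and] at hj
  simp [hj]

lemma gvec_gt (m i : ℕ) (x : Fin (2 ^ m)) (h : i < x.val) : gvec m i x = 0 := by
  rw [gvec_apply]
  by_contra hne
  rw [← ne_eq, Finset.prod_ne_zero_iff] at hne
  have : x.val ≤ i := by
    apply Nat.le_of_testBit
    intro j hj
    by_cases hjm : j < m
    · by_contra hb
      apply hne ⟨j, hjm⟩ (by simpa using hb)
      simp only [hj, if_true]
      exact CharTwo.add_self_eq_zero _
    · have hp : 2 ^ m ≤ 2 ^ j := Nat.pow_le_pow_right (by norm_num) (by omega)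
      rw [Nat.testBit_lt_two_pow (x.2.trans_le hp)] at hj
      simp at hj
  omega

lemma wt_eq (m : ℕ) : ∀ i, i < 2 ^ m →
    wt i + (Finset.univ.filter (fun j : Fin m => Nat.testBit i j.val = false)).card = m := by
  induction m with
  | zero => intro i hi; obtain rfl : i = 0 := by simpa using hi
            simp [wt_zero]
  | succ m ih =>
    intro i hi
    have h := ih (i / 2) (by rw [pow_succ] at hi; omega)
    rw [Finset.card_filter] at h ⊢
    rw [Fin.sum_univ_succ, wt_rec]
    simp only [Fin.val_succ, Nat.testBit_add_one, Fin.val_zero, Nat.testBit_zero]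
    rcases Nat.mod_two_eq_zero_or_one i with h0 | h0 <;> simp [h0] at h ⊢ <;> omega

lemma gvec_mem (r m t i : ℕ) (h : r + t = m) (hi : i < 2 ^ m) (ht : t ≤ wt i) :
    gvec m i ∈ RMcode r m := by
  apply Submodule.subset_span
  refine ⟨_, ?_, rfl⟩
  refine (MvPolynomial.totalDegree_finsetProd _ _).trans ?_
  have h1 : ∀ j ∈ Finset.univ.filter (fun j : Fin m => Nat.testBit i j.val = false),
      (1 + MvPolynomial.X j : MvPolynomial (Fin m) (ZMod 2)).totalDegree ≤ 1 := by
    intro j _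
    refine (MvPolynomial.totalDegree_add _ _).trans ?_
    simp
  refine (Finset.sum_le_card_nsmul _ _ 1 h1).trans ?_
  have := wt_eq m i hi
  simp only [smul_eq_mul, mul_one]
  omega

lemma NN_eq_card (s t : ℕ) : NN s t = ((Finset.range s).filter (fun i => t ≤ wt i)).card := by
  induction s with
  | zero => rfl
  | succ s ih =>
    rw [NN_succ, ih, Finset.range_add_one, Finset.filter_insert]
    split_ifs
    · rw [Finset.card_insert_of_notMem (by simp)]
    · rfl

lemma gvec_indep (m : ℕ) (A : Finset ℕ) (hA : ∀ i ∈ A, i < 2 ^ m) :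
    LinearIndependent (ZMod 2) (fun i : A => gvec m i) := by
  classical
  rw [Fintype.linearIndependent_iff]
  intro c hc
  by_contra hne
  push Not at hne
  let B := Finset.univ.filter (fun i : A => c i ≠ 0)
  have hB : B.Nonempty := by
    obtain ⟨i, hi⟩ := hne
    exact ⟨i, by simp [B, hi]⟩
  obtain ⟨k, hk, hmax⟩ := B.exists_max_image (fun i => i.val) hB
  have hck : c k ≠ 0 := by simpa [B] using hk
  have h := congrFun hc ⟨k.val, hA _ k.2⟩
  rw [Finset.sum_apply, Finset.sum_eq_single k] at h
  · rw [Pi.smul_apply, smul_eq_mul] at h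
    have := gvec_self m ⟨k.val, hA _ k.2⟩
    simp only at this
    rw [this, mul_one] at h
    exact hck h
  · intro i _ hik
    rw [Pi.smul_apply, smul_eq_mul]
    by_cases hci : c i = 0
    · rw [hci, zero_mul]
    · have h1 := hmax i (by simp [B, hci])
      have h2 : i.val ≠ k.val := fun e => hik (Subtype.ext e)
      rw [gvec_gt m i ⟨k.val, hA _ k.2⟩ (lt_of_le_of_ne h1 h2), mul_zero]
  · simp

lemma Ucap_eq (r m t s : ℕ) (h : r + t = m) (hs : s ≤ 2 ^ m) :
    Ucap (RMcode r m) s = NN s t := by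
  unfold Ucap
  apply le_antisymm
  · apply csSup_le'
    rintro d ⟨D, hD, hc, rfl⟩
    exact dim_le r m t s h D hD hc
  · apply le_csSup
    · refine ⟨NN s t, ?_⟩
      rintro d ⟨D, hD, hc, rfl⟩
      exact dim_le r m t s h D hD hc
    · let A := (Finset.range s).filter (fun i => t ≤ wt i)
      have hA : ∀ i ∈ A, i < 2 ^ m := by
        intro i hi
        simp only [A, Finset.mem_filter, Finset.mem_range] at hi
        omega
      refine ⟨Submodule.span (ZMod 2) (Set.range (fun i : A => gvec m i)), ?_, ?_, ?_⟩
      · rw [Submodule.span_le]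
        rintro _ ⟨i, rfl⟩
        have := i.2
        simp only [A, Finset.mem_filter] at this
        exact gvec_mem r m t i h (hA _ i.2) this.2
      · have hsub : chi (Submodule.span (ZMod 2) (Set.range (fun i : A => gvec m i)))
            ⊆ {x : Fin (2 ^ m) | x.val < s} := by
          rintro x ⟨c, hc, hx⟩
          by_contra hxs
          apply hx
          have hxs' : s ≤ x.val := by simpa using hxs
          have : Submodule.span (ZMod 2) (Set.range (fun i : A => gvec m i)) ≤
              LinearMap.ker (LinearMap.proj x : (Fin (2 ^ m) → ZMod 2) →ₗ[ZMod 2] ZMod 2) := by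
            rw [Submodule.span_le]
            rintro _ ⟨i, rfl⟩
            have := i.2
            simp only [A, Finset.mem_filter, Finset.mem_range] at this
            exact gvec_gt m i x (by omega)
          exact this hc
        refine (Set.ncard_le_ncard hsub (Set.toFinite _)).trans ?_
        calc _ ≤ (Finset.range s : Set ℕ).ncard := by
              apply Set.ncard_le_ncard_of_injOn (fun x : Fin (2 ^ m) => x.val)
              · intro x hx; simpa using hx
              · exact fun a _ b _ hab => Fin.ext hab
          _ = s := by rw [Set.ncard_coe_finset, Finset.card_range]
      · rw [finrank_span_eq_card (gvec_indep m A hA), NN_eq_card]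
        simp [A]

/-- `U_α + U_β + U_1 = k(r,m) − τ(r,m)` for `m ≥ 3`, `0 ≤ r ≤ m−1`. -/
theorem stmt11 (r m : ℕ) (hm : 3 ≤ m) (hr : r ≤ m - 1) :
    ((Ucap (RMcode r m) (alph m) + Ucap (RMcode r m) (bet m) + Ucap (RMcode r m) 1 : ℕ) : ℤ) =
      (kRM r m : ℤ) - tauRM r m := by
  obtain ⟨t, rfl⟩ : ∃ t, m = r + t := ⟨m - r, by omega⟩
  have ht : 1 ≤ t := by omega
  have hp : 1 ≤ 2 ^ (r + t) := Nat.one_le_two_pow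
  rw [Ucap_eq r _ t _ rfl (by unfold alph; rw [pow_succ]; omega),
    Ucap_eq r _ t _ rfl (by unfold bet; omega), Ucap_eq r _ t _ rfl hp,
    kRM_eq (r + t) t r rfl]
  have h := main_count (r + t) t
  have h1 : NN 1 t = 0 := by
    rw [NN_succ, NN_zero, wt_zero, if_neg (by omega)]
  have h2 : TT (r + t) t = tauRM r (r + t) := by
    rw [TT, if_pos (by omega), Nat.add_sub_cancel]
  have h3 : alph (r + t) = bet (r + t + 1) := rfl
  rw [h2] at h
  rw [h1, h3, ← h]
  push_cast
  ring
end
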